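/- Let n₁, n₂ ∈ ℕ and let κ : Σ × (ℝ^{n} \ {0}) → ℂ be a function (n = n₁ + n₂) such that there exists C > 0 with |∂_ζ^γ κ(λ, ζ)| · |ζ|^{|γ|} ≤ C for all λ ∈ Σ, ζ ∈ ℝⁿ \ {0} and all multi-indices γ ≤ (1,…,1), where κ(λ, ·) is C¹ in each coordinate. Then for every multi-index γ = (γ₁, γ₂) with γ₂ ≠ 0, every ξ ∈ ℝ^{n₁} \ {0}, and every k ∈ ℤ^{n₂} with |k_j| ≥ 2 in each coordinate where γ₂ is nonzero, the discrete-continuous mixed difference satisfies |ξ^{γ₁} k^{γ₂} ∂_ξ^{γ₁} Δ_k^{γ₂} κ(λ,(ξ,k))| ≤ C' for a constant C' depending only on C and n, where Δ_k^{e_j} M(k) = M(k) − M(k − e_j) denotes the backward partial difference in the j-th discrete coordinate. -/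

import Mathlib

open scoped BigOperators

/-- Partial derivative of `f : ℝⁿ → ℂ` in the `j`-th coordinate. -/
noncomputable def pderivCoord {n : ℕ} (j : Fin n) (f : (Fin n → ℝ) → ℂ) :
    (Fin n → ℝ) → ℂ :=
  fun x => deriv (fun t => f (Function.update x j t)) (x j)

/-- Iterated partial derivative `∂^γ` for a multi-index `γ ≤ (1,…,1)`. -/
noncomputable def mpderiv {n : ℕ} (γ : Fin n → ℕ) (f : (Fin n → ℝ) → ℂ) :
    (Fin n → ℝ) → ℂ :=
  (List.finRange n).foldr (fun j g => if γ j = 1 then pderivCoord j g else g) f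

/-- Backward partial difference `Δ^{e_j} M (k) = M(k) - M(k - e_j)`. -/
def ddiffCoord {m : ℕ} (j : Fin m) (M : (Fin m → ℤ) → ℂ) : (Fin m → ℤ) → ℂ :=
  fun k => M k - M (Function.update k j (k j - 1))

/-- Iterated partial difference `Δ^γ` for a multi-index `γ ≤ (1,…,1)`. -/
def mddiff {m : ℕ} (γ : Fin m → ℕ) (M : (Fin m → ℤ) → ℂ) : (Fin m → ℤ) → ℂ :=
  (List.finRange m).foldr (fun j g => if γ j = 1 then ddiffCoord j g else g) M

/-!
On the box of all `x` with `|x i - z i| ≤ |z i| / 2`, where `z = (ξ, k)`, one has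
`|z i| ≤ 2 |x i|`, so the hypothesis bounds `∂_ξ^{γ₁} ∂_η^{γ₂} κ` there by a multiple of
`|ξ^{γ₁} k^{γ₂}|⁻¹`; the box contains `k - e_j` because `2 ≤ |k_j|`.

The mean value theorem would transfer this bound to `∂_ξ^{γ₁} Δ_k^{γ₂} κ` at once if the
derivatives in `ξ` and `η` commuted, but they are not assumed to be continuous. Mixed differences
do commute: the mean value theorem, applied in every active coordinate starting from the outermost
derivative, bounds the mixed difference of `κ` over every rectangle in the box by its volume times
the bound on the derivative. Reordering, dividing by the side lengths in `ξ` and letting these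
tend to `0` one by one gives the estimate.
-/

/-- An axis-parallel segment in `ι → ℝ`, up to translations orthogonal to its axis: the `coord`-th
coordinate runs from `src` to `tgt`. It records one factor of a rectangular mixed difference. -/
structure AxisSegment (ι : Type*) where
  coord : ι
  src : ℝ
  tgt : ℝ

namespace AxisSegment

variable {ι E : Type*}

/-- The length of an axis-parallel segment. -/
def length (s : AxisSegment ι) : ℝ := |s.tgt - s.src|

/-- The segment has its endpoints in the corresponding side of the box `∏ i, I i`. -/
def MemBox (s : AxisSegment ι) (I : ι → Set ℝ) : Prop := s.src ∈ I s.coord ∧ s.tgt ∈ I s.coord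

variable [DecidableEq ι]

/-- The partial difference of `f` along the segment `s`; the value of the coordinate `s.coord` at
the base point is ignored. -/
def diff [Sub E] (s : AxisSegment ι) (f : (ι → ℝ) → E) : (ι → ℝ) → E :=
  fun x ↦ f (Function.update x s.coord s.tgt) - f (Function.update x s.coord s.src)

/-- The rectangular mixed difference of `f` along a list of axis-parallel segments. -/
def iterDiff [Sub E] (S : List (AxisSegment ι)) (f : (ι → ℝ) → E) : (ι → ℝ) → E :=
  S.foldr diff f

instance leftCommutative_diff [AddCommGroup E] :
    LeftCommutative (diff : AxisSegment ι → ((ι → ℝ) → E) → (ι → ℝ) → E) where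
  left_comm s t f := by
    funext x
    rcases eq_or_ne s.coord t.coord with h | h
    · simp [diff, h]
    · simp only [diff, Function.update_comm h]
      abel

theorem iterDiff_perm [AddCommGroup E] {S T : List (AxisSegment ι)} (h : S.Perm T)
    (f : (ι → ℝ) → E) : iterDiff S f = iterDiff T f :=
  h.foldr_eq f

theorem iterDiff_concat [AddCommGroup E] (S : List (AxisSegment ι)) (s : AxisSegment ι)
    (f : (ι → ℝ) → E) : iterDiff (S ++ [s]) f = s.diff (iterDiff S f) :=
  iterDiff_perm (List.perm_append_singleton s S) f

end AxisSegment

section MeanValue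

open AxisSegment

variable {ι E : Type*} [DecidableEq ι] [NormedAddCommGroup E] [NormedSpace ℝ E]
  {I : ι → Set ℝ} {S T : List (AxisSegment ι)} {F : List ι → (ι → ℝ) → E} {L : List ι}
  {f f' : (ι → ℝ) → E} {x : ι → ℝ} {j : ι} {K : ℝ}

theorem hasDerivAt_iterDiff
    (hf : ∀ x ∈ Set.univ.pi I, HasDerivAt (fun t ↦ f (Function.update x j t)) (f' x) (x j))
    (hS : ∀ s ∈ S, s.MemBox I) (hj : ∀ s ∈ S, s.coord ≠ j) :
    ∀ x ∈ Set.univ.pi I,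
      HasDerivAt (fun t ↦ iterDiff S f (Function.update x j t)) (iterDiff S f' x) (x j) := by
  induction S with
  | nil => exact hf
  | cons s S ih =>
    rw [List.forall_mem_cons] at hS hj
    intro x hx
    have hderiv {a : ℝ} (ha : a ∈ I s.coord) :
        HasDerivAt (fun t ↦ iterDiff S f (Function.update (Function.update x j t) s.coord a))
          (iterDiff S f' (Function.update x s.coord a)) (x j) := by
      have h := ih hS.2 hj.2 _ ((Set.update_mem_pi_iff_of_mem hx).2 fun _ ↦ ha)
      simpa only [Function.update_comm hj.1, Function.update_of_ne hj.1.symm] using h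
    exact (hderiv hS.1.2).sub (hderiv hS.1.1)

theorem norm_iterDiff_concat_le (hI : Convex ℝ (I j))
    (hf : ∀ x ∈ Set.univ.pi I, HasDerivAt (fun t ↦ f (Function.update x j t)) (f' x) (x j))
    (hS : ∀ s ∈ S, s.MemBox I) (hj : ∀ s ∈ S, s.coord ≠ j)
    (hK : ∀ x ∈ Set.univ.pi I, ‖iterDiff S f' x‖ ≤ K) {a b : ℝ} (ha : a ∈ I j) (hb : b ∈ I j)
    (hx : x ∈ Set.univ.pi I) : ‖iterDiff (S ++ [⟨j, a, b⟩]) f x‖ ≤ K * |b - a| := by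
  have hmem {t : ℝ} (ht : t ∈ I j) : Function.update x j t ∈ Set.univ.pi I :=
    (Set.update_mem_pi_iff_of_mem hx).2 fun _ ↦ ht
  have hderiv (t : ℝ) (ht : t ∈ I j) :
      HasDerivAt (fun t ↦ iterDiff S f (Function.update x j t))
        (iterDiff S f' (Function.update x j t)) t := by
    simpa using hasDerivAt_iterDiff hf hS hj _ (hmem ht)
  rw [iterDiff_concat]
  exact hI.norm_image_sub_le_of_norm_hasDerivWithin_le
    (fun t ht ↦ (hderiv t ht).hasDerivWithinAt) (fun t ht ↦ hK _ (hmem ht)) ha hb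

theorem norm_iterDiff_deriv_le (hI : I j ∈ nhds (x j))
    (hf : ∀ x ∈ Set.univ.pi I, HasDerivAt (fun t ↦ f (Function.update x j t)) (f' x) (x j))
    (hS : ∀ s ∈ S, s.MemBox I) (hj : ∀ s ∈ S, s.coord ≠ j) (hx : x ∈ Set.univ.pi I) (hK₀ : 0 ≤ K)
    (hK : ∀ b ∈ I j, ‖iterDiff (S ++ [⟨j, x j, b⟩]) f x‖ ≤ K * |b - x j|) :
    ‖iterDiff S f' x‖ ≤ K := by
  refine (hasDerivAt_iterDiff hf hS hj x hx).le_of_lip' hK₀ ?_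
  filter_upwards [hI] with b hb
  simpa [iterDiff_concat, diff] using hK b hb

/-- `F` is a chain of successive partial derivatives along `L` on the box `∏ i, I i`: for every
suffix `j :: l` of `L`, the function `F (j :: l)` is the `j`-th partial derivative of `F l`. Thus
`F l` plays the role of `∂_l (F [])`, with the head of `l` differentiated last. -/
def IsPartialDerivChain (I : ι → Set ℝ) (F : List ι → (ι → ℝ) → E) (L : List ι) : Prop :=
  ∀ j l, j :: l <:+ L → ∀ x ∈ Set.univ.pi I,
    HasDerivAt (fun t ↦ F l (Function.update x j t)) (F (j :: l) x) (x j)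

theorem IsPartialDerivChain.tail (hF : IsPartialDerivChain I F (j :: L)) :
    IsPartialDerivChain I F L :=
  fun i l hl ↦ hF i l (hl.trans (List.suffix_cons j L))

theorem norm_iterDiff_append_le (hI : ∀ i, Convex ℝ (I i))
    (hF : IsPartialDerivChain I F (T.map coord)) (hnodup : ((S ++ T).map coord).Nodup)
    (hS : ∀ s ∈ S, s.MemBox I) (hT : ∀ t ∈ T, t.MemBox I)
    (hK : ∀ x ∈ Set.univ.pi I, ‖iterDiff S (F (T.map coord)) x‖ ≤ K) :
    ∀ x ∈ Set.univ.pi I, ‖iterDiff (S ++ T) (F []) x‖ ≤ K * (T.map length).prod := by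
  induction T generalizing S K with
  | nil => simpa using hK
  | cons t T ih =>
    rw [List.forall_mem_cons] at hT
    have hj : ∀ s ∈ S, s.coord ≠ t.coord := by
      rw [List.map_append, List.nodup_append] at hnodup
      exact fun s hs ↦ hnodup.2.2 _ (List.mem_map_of_mem hs) _ (by simp)
    have hstep : ∀ x ∈ Set.univ.pi I,
        ‖iterDiff (S ++ [t]) (F (T.map coord)) x‖ ≤ K * t.length := fun x hx ↦
      norm_iterDiff_concat_le (hI _) (hF _ _ List.suffix_rfl) hS hj hK hT.1.1 hT.1.2 hx
    have hSt : ∀ s ∈ S ++ [t], s.MemBox I := by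
      simpa [or_imp, forall_and] using And.intro hS hT.1
    simpa [mul_assoc] using ih hF.tail (by simpa using hnodup) hSt hT.2 hstep

theorem norm_iterDiff_le_of_forall_append (hF : IsPartialDerivChain I F L)
    (hnodup : (S.map coord ++ L).Nodup) (hS : ∀ s ∈ S, s.MemBox I)
    (hx : x ∈ Set.univ.pi I) (hL : ∀ i ∈ L, I i ∈ nhds (x i)) (hK₀ : 0 ≤ K)
    (hK : ∀ T : List (AxisSegment ι), T.map coord = L → (∀ t ∈ T, t.MemBox I) →
      ‖iterDiff (S ++ T) (F []) x‖ ≤ K * (T.map length).prod) :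
    ‖iterDiff S (F L) x‖ ≤ K := by
  induction L generalizing S K with
  | nil => simpa using hK [] rfl (by simp)
  | cons j L ih =>
    have hj : ∀ s ∈ S, s.coord ≠ j := by
      rw [List.nodup_append] at hnodup
      exact fun s hs ↦ hnodup.2.2 _ (List.mem_map_of_mem hs) _ (by simp)
    rw [List.forall_mem_cons] at hL
    refine norm_iterDiff_deriv_le hL.1 (hF _ _ List.suffix_rfl) hS hj hx hK₀ fun b hb ↦ ?_
    have hs : (⟨j, x j, b⟩ : AxisSegment ι).MemBox I := ⟨hx j trivial, hb⟩
    refine ih hF.tail (by simpa using hnodup)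
      (by simpa [or_imp, forall_and] using And.intro hS hs) hL.2 (by positivity) fun T hTL hT ↦ ?_
    simpa [mul_assoc, length] using
      hK (⟨j, x j, b⟩ :: T) (by simp [hTL]) (List.forall_mem_cons.2 ⟨hs, hT⟩)

theorem norm_iterDiff_le_of_norm_partialDeriv_le (hI : ∀ i, Convex ℝ (I i))
    (hF : IsPartialDerivChain I F L) (hFS : IsPartialDerivChain I F (L ++ S.map coord))
    (hnodup : (L ++ S.map coord).Nodup) (hS : ∀ s ∈ S, s.MemBox I)
    (hx : x ∈ Set.univ.pi I) (hL : ∀ i ∈ L, I i ∈ nhds (x i))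
    (hK : ∀ y ∈ Set.univ.pi I, ‖F (L ++ S.map coord) y‖ ≤ K) :
    ‖iterDiff S (F L) x‖ ≤ K * (S.map length).prod := by
  have hlen : 0 ≤ (S.map length).prod :=
    List.prod_nonneg fun _ h ↦ by obtain ⟨s, -, rfl⟩ := List.mem_map.1 h; exact abs_nonneg _
  refine norm_iterDiff_le_of_forall_append hF (List.nodup_append_comm.1 hnodup) hS hx hL
    (mul_nonneg ((norm_nonneg _).trans (hK x hx)) hlen) fun T hTL hT ↦ ?_
  subst hTL
  rw [← List.map_append] at hFS hnodup hK
  have hTS : ∀ t ∈ T ++ S, t.MemBox I := by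
    simpa [or_imp, forall_and] using And.intro hT hS
  have h := norm_iterDiff_append_le (S := []) hI hFS hnodup (by simp) hTS hK x hx
  rw [iterDiff_perm List.perm_append_comm]
  simpa [mul_assoc, mul_comm, mul_left_comm] using h

end MeanValue

section ActiveCoords

variable {n : ℕ}

/-- The increasing list of the coordinates in which a multi-index equals `1`, that is, of those
in which `mpderiv` differentiates and `mddiff` takes differences. -/
def activeCoords (γ : Fin n → ℕ) : List (Fin n) := (List.finRange n).filter (γ · = 1)

theorem mem_activeCoords {γ : Fin n → ℕ} {j : Fin n} : j ∈ activeCoords γ ↔ γ j = 1 := by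
  simp [activeCoords]

theorem nodup_activeCoords (γ : Fin n → ℕ) : (activeCoords γ).Nodup :=
  (List.nodup_finRange n).filter _

theorem activeCoords_append {n₁ n₂ : ℕ} (γ₁ : Fin n₁ → ℕ) (γ₂ : Fin n₂ → ℕ) :
    activeCoords (Fin.append γ₁ γ₂) =
      (activeCoords γ₁).map (Fin.castAdd n₂) ++ (activeCoords γ₂).map (Fin.natAdd n₁) := by
  have hfin : List.finRange (n₁ + n₂) =
      (List.finRange n₁).map (Fin.castAdd n₂) ++ (List.finRange n₂).map (Fin.natAdd n₁) := by
    rw [← List.ofFn_id, ← List.ofFn_id, ← List.ofFn_id, List.map_ofFn, List.map_ofFn,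
      ← List.ofFn_fin_append]
    congr 1
    exact (Fin.append_castAdd_natAdd (f := id)).symm
  simp [activeCoords, hfin, List.filter_map, Function.comp_def]

theorem activeCoords_append_zero {n₁ n₂ : ℕ} (γ₁ : Fin n₁ → ℕ) :
    activeCoords (Fin.append γ₁ (0 : Fin n₂ → ℕ)) = (activeCoords γ₁).map (Fin.castAdd n₂) := by
  rw [activeCoords_append]
  simp [activeCoords]

theorem activeCoords_indicator {l : List (Fin n)} (hl : l.Sublist (List.finRange n)) :
    activeCoords (fun i ↦ if i ∈ l then 1 else 0) = l := by
  have hlt := List.pairwise_lt_finRange n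
  exact (hlt.filter _).eq_of_mem_iff (hlt.sublist hl) fun i ↦ by simp

theorem mpderiv_eq_foldr (γ : Fin n → ℕ) (f : (Fin n → ℝ) → ℂ) :
    mpderiv γ f = (activeCoords γ).foldr pderivCoord f := by
  simp [mpderiv, activeCoords, List.foldr_filter]

theorem mddiff_eq_foldr (γ : Fin n → ℕ) (M : (Fin n → ℤ) → ℂ) :
    mddiff γ M = (activeCoords γ).foldr ddiffCoord M := by
  simp [mddiff, activeCoords, List.foldr_filter]

theorem isPartialDerivChain_foldr_pderivCoord {I : Fin n → Set ℝ} {f : (Fin n → ℝ) → ℂ}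
    {γ : Fin n → ℕ} {L : List (Fin n)} (hL : L.Sublist (activeCoords γ))
    (hf : ∀ δ ≤ γ, ∀ j, ∀ x ∈ Set.univ.pi I,
      DifferentiableAt ℝ (fun t ↦ mpderiv δ f (Function.update x j t)) (x j)) :
    IsPartialDerivChain I (fun l ↦ l.foldr pderivCoord f) L := by
  intro j l hl x hx
  have hsub : l.Sublist (activeCoords γ) :=
    ((List.suffix_cons j l).sublist.trans hl.sublist).trans hL
  have hle : (fun i ↦ if i ∈ l then 1 else 0) ≤ γ := by
    intro i
    dsimp only
    split_ifs with hi
    · exact (mem_activeCoords.1 (hsub.subset hi)).ge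
    · exact Nat.zero_le _
  have h := (hf _ hle j x hx).hasDerivAt
  rwa [mpderiv_eq_foldr, activeCoords_indicator (hsub.trans List.filter_sublist)] at h

end ActiveCoords

section Lattice

open AxisSegment

variable {n₁ n₂ : ℕ}

/-- The point `(ξ, k)` of `ℝ^{n₁} × ℤ^{n₂} ⊆ ℝ^{n₁ + n₂}`. -/
def mixedPoint (ξ : Fin n₁ → ℝ) (k : Fin n₂ → ℤ) : Fin (n₁ + n₂) → ℝ :=
  Fin.append ξ fun j ↦ (k j : ℝ)

/-- The segment from `k j - 1` to `k j` in the `j`-th discrete coordinate, along which `Δ^{e_j}`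
at `k` takes the difference. -/
def backwardSegment (n₁ : ℕ) (k : Fin n₂ → ℤ) (j : Fin n₂) : AxisSegment (Fin (n₁ + n₂)) :=
  ⟨Fin.natAdd n₁ j, k j - 1, k j⟩

theorem mixedPoint_update (ξ : Fin n₁ → ℝ) (k : Fin n₂ → ℤ) (j : Fin n₂) (m : ℤ) :
    mixedPoint ξ (Function.update k j m) =
      Function.update (mixedPoint ξ k) (Fin.natAdd n₁ j) m := by
  funext i
  refine Fin.addCases (fun i ↦ ?_) (fun i ↦ ?_) i
  · simp [mixedPoint, Function.update_apply, Fin.ext_iff, (i.2.trans_le (Nat.le_add_right _ _)).ne]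
  · rcases eq_or_ne i j with rfl | h <;> simp [mixedPoint, *]

theorem foldr_ddiffCoord_mixedPoint (f : (Fin (n₁ + n₂) → ℝ) → ℂ) (ξ : Fin n₁ → ℝ)
    {L : List (Fin n₂)} (hL : L.Nodup) (k : Fin n₂ → ℤ) :
    L.foldr ddiffCoord (fun k ↦ f (mixedPoint ξ k)) k =
      iterDiff (L.map (backwardSegment n₁ k)) f (mixedPoint ξ k) := by
  induction L generalizing k with
  | nil => rfl
  | cons j L ih =>
    rw [List.nodup_cons] at hL
    have hseg : L.map (backwardSegment n₁ (Function.update k j (k j - 1))) =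
        L.map (backwardSegment n₁ k) :=
      List.map_congr_left fun i hi ↦ by
        simp [backwardSegment, Function.update_of_ne (ne_of_mem_of_not_mem hi hL.1)]
    have htgt : mixedPoint ξ k = Function.update (mixedPoint ξ k) (Fin.natAdd n₁ j) (k j) := by
      rw [← mixedPoint_update, Function.update_eq_self]
    have hsrc : mixedPoint ξ (Function.update k j (k j - 1)) =
        Function.update (mixedPoint ξ k) (Fin.natAdd n₁ j) (k j - 1 : ℝ) := by
      rw [mixedPoint_update, Int.cast_sub, Int.cast_one]
    rw [List.foldr_cons, ddiffCoord, ih hL.2, ih hL.2, hseg, hsrc]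
    nth_rewrite 1 [htgt]
    rfl

end Lattice

section RelativeBox

variable {n : ℕ} {x z : Fin n → ℝ}

/-- The box around `z` with relative radius `1 / 2` in each coordinate. On it all coordinates are
comparable with those of `z`, and it contains `k - e_j` together with `k` as soon as `2 ≤ |k_j|`. -/
def relativeBox (z : Fin n → ℝ) : Fin n → Set ℝ := fun i ↦ Metric.closedBall (z i) (|z i| / 2)

theorem self_mem_relativeBox (z : Fin n → ℝ) : z ∈ Set.univ.pi (relativeBox z) :=
  fun i _ ↦ Metric.mem_closedBall_self (by positivity)

theorem abs_le_two_mul_abs_of_mem_relativeBox (hx : x ∈ Set.univ.pi (relativeBox z)) (i : Fin n) :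
    |z i| ≤ 2 * |x i| := by
  have hdist : |z i - x i| ≤ |z i| / 2 := Metric.mem_closedBall'.1 (hx i trivial)
  linarith [abs_sub_abs_le_abs_sub (z i) (x i)]

theorem ne_zero_of_mem_relativeBox (hz : z ≠ 0) (hx : x ∈ Set.univ.pi (relativeBox z)) :
    x ≠ 0 := by
  rintro rfl
  exact hz (funext fun i ↦ by simpa using abs_le_two_mul_abs_of_mem_relativeBox hx i)

theorem prod_abs_pow_le_of_mem_relativeBox (γ : Fin n → ℕ)
    (hx : x ∈ Set.univ.pi (relativeBox z)) :
    ∏ i, |z i| ^ γ i ≤ (2 * ‖x‖) ^ ∑ i, γ i := by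
  rw [← Finset.prod_pow_eq_pow_sum]
  gcongr with i
  exact (abs_le_two_mul_abs_of_mem_relativeBox hx i).trans (by gcongr; exact norm_le_pi_norm x i)

theorem prod_mul_norm_mpderiv_le_of_mem_relativeBox {f : (Fin n → ℝ) → ℂ} {γ : Fin n → ℕ} {C : ℝ}
    (hx : x ∈ Set.univ.pi (relativeBox z)) (hbd : ‖x‖ ^ (∑ j, γ j) * ‖mpderiv γ f x‖ ≤ C) :
    (∏ i, |z i| ^ γ i) * ‖mpderiv γ f x‖ ≤ 2 ^ (∑ j, γ j) * C :=
  calc (∏ i, |z i| ^ γ i) * ‖mpderiv γ f x‖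
      ≤ (2 * ‖x‖) ^ (∑ j, γ j) * ‖mpderiv γ f x‖ := by
        gcongr; exact prod_abs_pow_le_of_mem_relativeBox γ hx
    _ = 2 ^ (∑ j, γ j) * (‖x‖ ^ (∑ j, γ j) * ‖mpderiv γ f x‖) := by rw [mul_pow, mul_assoc]
    _ ≤ 2 ^ (∑ j, γ j) * C := by gcongr

end RelativeBox

section MixedEstimate

open AxisSegment

variable {n₁ n₂ : ℕ}

theorem backwardSegment_memBox_relativeBox (ξ : Fin n₁ → ℝ) {k : Fin n₂ → ℤ} {j : Fin n₂}
    (hk : 2 ≤ |k j|) : (backwardSegment n₁ k j).MemBox (relativeBox (mixedPoint ξ k)) := by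
  have hk' : (2 : ℝ) ≤ |(k j : ℝ)| := mod_cast hk
  simp only [MemBox, backwardSegment, relativeBox, mixedPoint, Fin.append_right,
    Metric.mem_closedBall, Real.dist_eq, sub_self, sub_sub_cancel_left, abs_neg, abs_one, abs_zero]
  constructor <;> linarith

theorem norm_mddiff_mpderiv_le_of_relativeBox {f : (Fin (n₁ + n₂) → ℝ) → ℂ} {γ₁ : Fin n₁ → ℕ}
    {γ₂ : Fin n₂ → ℕ} {ξ : Fin n₁ → ℝ} {k : Fin n₂ → ℤ} {K : ℝ}
    (hf : ∀ δ ≤ Fin.append γ₁ γ₂, ∀ j, ∀ x ∈ Set.univ.pi (relativeBox (mixedPoint ξ k)),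
      DifferentiableAt ℝ (fun t ↦ mpderiv δ f (Function.update x j t)) (x j))
    (hξ : ∀ j, γ₁ j = 1 → ξ j ≠ 0) (hk : ∀ j, γ₂ j = 1 → 2 ≤ |k j|)
    (hK : ∀ x ∈ Set.univ.pi (relativeBox (mixedPoint ξ k)),
      ‖mpderiv (Fin.append γ₁ γ₂) f x‖ ≤ K) :
    ‖mddiff γ₂ (fun k' ↦ mpderiv (Fin.append γ₁ 0) f (mixedPoint ξ k')) k‖ ≤ K := by
  set L := (activeCoords γ₁).map (Fin.castAdd n₂)
  set S := (activeCoords γ₂).map (backwardSegment n₁ k) with hS_def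
  have hLS : activeCoords (Fin.append γ₁ γ₂) = L ++ S.map coord := by
    rw [activeCoords_append, hS_def, List.map_map]
    rfl
  have hmem : ∀ s ∈ S, s.MemBox (relativeBox (mixedPoint ξ k)) := by
    intro s hs
    obtain ⟨j, hj, rfl⟩ := List.mem_map.1 hs
    exact backwardSegment_memBox_relativeBox ξ (hk j (mem_activeCoords.1 hj))
  have hnhds : ∀ i ∈ L, relativeBox (mixedPoint ξ k) i ∈ nhds (mixedPoint ξ k i) := by
    intro i hi
    obtain ⟨j, hj, rfl⟩ := List.mem_map.1 hi
    have hξj : ξ j ≠ 0 := hξ j (mem_activeCoords.1 hj)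
    exact Metric.closedBall_mem_nhds _ (by simpa [mixedPoint] using hξj)
  have hlength : (S.map length).prod = 1 := by
    simp [hS_def, backwardSegment, length, Function.comp_def]
  rw [mddiff_eq_foldr, foldr_ddiffCoord_mixedPoint _ _ (nodup_activeCoords γ₂), mpderiv_eq_foldr,
    activeCoords_append_zero]
  have hsub : L.Sublist (activeCoords (Fin.append γ₁ γ₂)) :=
    hLS ▸ List.sublist_append_left L (S.map coord)
  simp only [mpderiv_eq_foldr _ f, hLS] at hK
  simpa [hlength] using norm_iterDiff_le_of_norm_partialDeriv_le
    (F := fun l ↦ l.foldr pderivCoord f) (fun i ↦ convex_closedBall _ _)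
    (isPartialDerivChain_foldr_pderivCoord hsub hf)
    (isPartialDerivChain_foldr_pderivCoord (hLS ▸ List.Sublist.refl _) hf)
    (hLS ▸ nodup_activeCoords _) hmem (self_mem_relativeBox _) hnhds hK

theorem mixed_michlin_estimate_general {f : (Fin (n₁ + n₂) → ℝ) → ℂ} {C : ℝ}
    {γ₁ : Fin n₁ → ℕ} {γ₂ : Fin n₂ → ℕ} (hγ : ∀ j, Fin.append γ₁ γ₂ j ≤ 1)
    (hf : ∀ δ ≤ Fin.append γ₁ γ₂, ∀ j, ∀ ζ ≠ 0,
      DifferentiableAt ℝ (fun t ↦ mpderiv δ f (Function.update ζ j t)) (ζ j))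
    (hbd : ∀ ζ ≠ 0,
      ‖ζ‖ ^ (∑ j, Fin.append γ₁ γ₂ j) * ‖mpderiv (Fin.append γ₁ γ₂) f ζ‖ ≤ C)
    {ξ : Fin n₁ → ℝ} {k : Fin n₂ → ℤ} (hξk : mixedPoint ξ k ≠ 0)
    (hk : ∀ j, γ₂ j ≠ 0 → 2 ≤ |k j|) :
    (∏ j, |ξ j| ^ γ₁ j) * (∏ j, |(k j : ℝ)| ^ γ₂ j) *
      ‖mddiff γ₂ (fun k' ↦ mpderiv (Fin.append γ₁ 0) f (mixedPoint ξ k')) k‖ ≤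
        2 ^ (n₁ + n₂) * C := by
  have hC : 0 ≤ C := le_trans (by positivity) (hbd _ hξk)
  have hsum : ∑ j, Fin.append γ₁ γ₂ j ≤ n₁ + n₂ := by
    simpa using Finset.sum_le_sum fun j (_ : j ∈ Finset.univ) ↦ hγ j
  have hprod : ∏ j, |mixedPoint ξ k j| ^ Fin.append γ₁ γ₂ j =
      (∏ j, |ξ j| ^ γ₁ j) * ∏ j, |(k j : ℝ)| ^ γ₂ j := by
    simp [Fin.prod_univ_add, mixedPoint]
  set P := (∏ j, |ξ j| ^ γ₁ j) * ∏ j, |(k j : ℝ)| ^ γ₂ j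
  have hP₀ : 0 ≤ P := by positivity
  rcases hP₀.eq_or_lt with hzero | hpos
  · rw [← hzero, zero_mul]
    positivity
  have hξ : ∀ j, γ₁ j = 1 → ξ j ≠ 0 := fun j hj hξj ↦
    hpos.ne' (mul_eq_zero_of_left (Finset.prod_eq_zero (Finset.mem_univ j) (by simp [hj, hξj])) _)
  rw [← le_div_iff₀' hpos]
  refine norm_mddiff_mpderiv_le_of_relativeBox
    (fun δ hδ j x hx ↦ hf δ hδ j x (ne_zero_of_mem_relativeBox hξk hx)) hξ
    (fun j hj ↦ hk j (by simp [hj])) fun x hx ↦ (le_div_iff₀' hpos).2 ?_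
  calc P * ‖mpderiv (Fin.append γ₁ γ₂) f x‖
      ≤ 2 ^ (∑ j, Fin.append γ₁ γ₂ j) * C := hprod ▸
        prod_mul_norm_mpderiv_le_of_mem_relativeBox hx
          (hbd x (ne_zero_of_mem_relativeBox hξk hx))
    _ ≤ 2 ^ (n₁ + n₂) * C := by gcongr; exact one_le_two

end MixedEstimate

/-- Mixed continuous/discrete Michlin-type estimate: if all multi-index derivatives
`∂^γ κ(λ,·)` of order `γ ≤ (1,…,1)` satisfy `|ζ|^{|γ|} |∂^γ κ(λ,ζ)| ≤ C`, then the mixed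
expressions `ξ^{γ₁} k^{γ₂} ∂_ξ^{γ₁} Δ_k^{γ₂} κ(λ,(ξ,k))` are uniformly bounded by a
constant `C'` depending only on `C` and the dimension, whenever `|k_j| ≥ 2` in every
discrete coordinate appearing in `γ₂`. -/
theorem mixed_michlin_estimate (n₁ n₂ : ℕ) (Λ : Type*)
    (κ : Λ → (Fin (n₁ + n₂) → ℝ) → ℂ) (C : ℝ) (hC : 0 < C)
    (hsmooth : ∀ (lam : Λ) (γ : Fin (n₁ + n₂) → ℕ), (∀ j, γ j ≤ 1) →
      ∀ (j : Fin (n₁ + n₂)) (ζ : Fin (n₁ + n₂) → ℝ), ζ ≠ 0 →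
        DifferentiableAt ℝ (fun t => mpderiv γ (κ lam) (Function.update ζ j t)) (ζ j))
    (hbd : ∀ (lam : Λ) (γ : Fin (n₁ + n₂) → ℕ), (∀ j, γ j ≤ 1) →
      ∀ ζ : Fin (n₁ + n₂) → ℝ, ζ ≠ 0 →
        ‖ζ‖ ^ (∑ j, γ j) * ‖mpderiv γ (κ lam) ζ‖ ≤ C) :
    ∃ C' : ℝ, 0 < C' ∧
      ∀ (lam : Λ) (γ₁ : Fin n₁ → ℕ) (γ₂ : Fin n₂ → ℕ),
        (∀ j, γ₁ j ≤ 1) → (∀ j, γ₂ j ≤ 1) → γ₂ ≠ 0 →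
        ∀ ξ : Fin n₁ → ℝ, ξ ≠ 0 →
        ∀ k : Fin n₂ → ℤ, (∀ j, γ₂ j ≠ 0 → 2 ≤ |k j|) →
          (∏ j, |ξ j| ^ γ₁ j) * (∏ j, |(k j : ℝ)| ^ γ₂ j) *
            ‖mddiff γ₂
              (fun k' => mpderiv (Fin.append γ₁ 0) (κ lam)
                (Fin.append ξ (fun j => ((k' j : ℝ))))) k‖ ≤ C' := by
  refine ⟨2 ^ (n₁ + n₂) * C, by positivity, fun lam γ₁ γ₂ hγ₁ hγ₂ _ ξ hξ k hk ↦ ?_⟩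
  have hγ : ∀ j, Fin.append γ₁ γ₂ j ≤ 1 := Fin.addCases (by simpa using hγ₁) (by simpa using hγ₂)
  have hξk : mixedPoint ξ k ≠ 0 := fun h ↦
    hξ (funext fun j ↦ by simpa [mixedPoint] using congrFun h (Fin.castAdd n₂ j))
  exact mixed_michlin_estimate_general hγ (fun δ hδ ↦ hsmooth lam δ fun j ↦ (hδ j).trans (hγ j))
    (hbd lam _ hγ) hξk hk
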